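/- Let U ⊆ ℝⁿ be open, let Γ be smooth Christoffel symbols on U, and suppose the same Γ satisfies both ∇h₁ = h₁ ⊗ Ψ₁ and ∇h₂ = h₂ ⊗ Ψ₂ on U, where h₁, h₂ are smooth metrics on U, Ψ₁, Ψ₂ are smooth 1-forms on U, and h₂ = α·h₁ for a smooth nowhere-vanishing function α : U → ℝ. Then Ψ₂ = Ψ₁ + d log|α|, i.e. (Ψ₂)ₖ = (Ψ₁)ₖ + (∂ₖα)/α on U for all k. -/

import Mathlib

/-- The `k`-th partial derivative of a scalar function on `ℝⁿ`. -/
noncomputable def pd {n : ℕ} (f : (Fin n → ℝ) → ℝ) (k : Fin n) (x : Fin n → ℝ) : ℝ :=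
  fderiv ℝ f x (Pi.single k 1)

/-- The covariant derivative `(∇ₖ g)ᵢⱼ = ∂ₖ gᵢⱼ − Σₗ Γˡₖᵢ gₗⱼ − Σₗ Γˡₖⱼ gᵢₗ` of a
matrix-valued field `g` with respect to the Christoffel symbols `Γ` (written `Γ x l k i`). -/
noncomputable def covDeriv {n : ℕ} (Γ : (Fin n → ℝ) → Fin n → Fin n → Fin n → ℝ)
    (g : (Fin n → ℝ) → Matrix (Fin n) (Fin n) ℝ) (k i j : Fin n) (x : Fin n → ℝ) : ℝ :=
  pd (fun y => g y i j) k x - (∑ l, Γ x l k i * g x l j) - ∑ l, Γ x l k j * g x i l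

/-- A smooth metric on `U`: a smooth field of symmetric invertible matrices. -/
def SmoothMetricOn {n : ℕ} (h : (Fin n → ℝ) → Matrix (Fin n) (Fin n) ℝ)
    (U : Set (Fin n → ℝ)) : Prop :=
  (∀ i j, ContDiffOn ℝ (⊤ : ℕ∞) (fun x => h x i j) U) ∧
  ∀ x ∈ U, (h x).IsSymm ∧ IsUnit (h x)

/-- Smooth Christoffel symbols on `U`. -/
def SmoothChristoffelOn {n : ℕ} (Γ : (Fin n → ℝ) → Fin n → Fin n → Fin n → ℝ)
    (U : Set (Fin n → ℝ)) : Prop :=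
  ∀ l k i, ContDiffOn ℝ (⊤ : ℕ∞) (fun x => Γ x l k i) U

open Topology

section Pointwise

variable {n : ℕ} {x : Fin n → ℝ} {U : Set (Fin n → ℝ)}

theorem pd_mul {f g : (Fin n → ℝ) → ℝ} (hf : DifferentiableAt ℝ f x)
    (hg : DifferentiableAt ℝ g x) (k : Fin n) :
    pd (fun y => f y * g y) k x = pd f k x * g x + f x * pd g k x := by
  unfold pd
  rw [fderiv_fun_mul hf hg]
  simp [mul_comm, add_comm]

theorem covDeriv_congr (Γ : (Fin n → ℝ) → Fin n → Fin n → Fin n → ℝ)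
    {g₁ g₂ : (Fin n → ℝ) → Matrix (Fin n) (Fin n) ℝ} (h : g₁ =ᶠ[𝓝 x] g₂) (k i j : Fin n) :
    covDeriv Γ g₁ k i j x = covDeriv Γ g₂ k i j x := by
  have hentry : (fun y => g₁ y i j) =ᶠ[𝓝 x] fun y => g₂ y i j := h.fun_comp (fun A => A i j)
  simp only [covDeriv, pd, hentry.fderiv_eq, h.eq_of_nhds]

theorem covDeriv_smul (Γ : (Fin n → ℝ) → Fin n → Fin n → Fin n → ℝ)
    {g : (Fin n → ℝ) → Matrix (Fin n) (Fin n) ℝ} {α : (Fin n → ℝ) → ℝ} {i j : Fin n}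
    (hα : DifferentiableAt ℝ α x) (hg : DifferentiableAt ℝ (fun y => g y i j) x) (k : Fin n) :
    covDeriv Γ (fun y => α y • g y) k i j x =
      pd α k x * g x i j + α x * covDeriv Γ g k i j x := by
  simp only [covDeriv, Matrix.smul_apply, smul_eq_mul, pd_mul hα hg, mul_left_comm _ (α x),
    ← Finset.mul_sum]
  ring

namespace SmoothMetricOn

variable {h : (Fin n → ℝ) → Matrix (Fin n) (Fin n) ℝ}

theorem differentiableAt_apply (hh : SmoothMetricOn h U) (hU : U ∈ 𝓝 x) (i j : Fin n) :
    DifferentiableAt ℝ (fun y => h y i j) x :=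
  ((hh.1 i j).contDiffAt hU).differentiableAt (by simp)

theorem ne_zero [Nonempty (Fin n)] (hh : SmoothMetricOn h U) (hx : x ∈ U) : h x ≠ 0 :=
  (hh.2 x hx).2.ne_zero

end SmoothMetricOn

/-- Expanding `∇(α h₁)` by the Leibniz rule turns the two equations into
`α h₁ ⊗ Ψ₂ = h₁ ⊗ dα + α h₁ ⊗ Ψ₁`, and a single nonzero entry of `h₁ x` can be cancelled. -/
theorem oneForm_rescaling_general {Γ : (Fin n → ℝ) → Fin n → Fin n → Fin n → ℝ}
    {h₁ h₂ : (Fin n → ℝ) → Matrix (Fin n) (Fin n) ℝ} {Ψ₁ Ψ₂ : (Fin n → ℝ) → Fin n → ℝ}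
    {α : (Fin n → ℝ) → ℝ} {k : Fin n}
    (hh₁ : ∀ i j, DifferentiableAt ℝ (fun y => h₁ y i j) x) (hh₁0 : h₁ x ≠ 0)
    (hα : DifferentiableAt ℝ α x) (hα0 : α x ≠ 0) (hαh : h₂ =ᶠ[𝓝 x] fun y => α y • h₁ y)
    (heq₁ : ∀ i j, covDeriv Γ h₁ k i j x = h₁ x i j * Ψ₁ x k)
    (heq₂ : ∀ i j, covDeriv Γ h₂ k i j x = h₂ x i j * Ψ₂ x k) :
    Ψ₂ x k = Ψ₁ x k + pd α k x / α x := by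
  obtain ⟨i, j, hij⟩ : ∃ i j, h₁ x i j ≠ 0 := by
    simpa [← Matrix.ext_iff] using hh₁0
  have hmul : h₁ x i j * (Ψ₂ x k * α x) = h₁ x i j * (Ψ₁ x k * α x + pd α k x) := by
    calc h₁ x i j * (Ψ₂ x k * α x)
        = h₂ x i j * Ψ₂ x k := by
          rw [hαh.eq_of_nhds, Matrix.smul_apply, smul_eq_mul]
          ring
      _ = covDeriv Γ (fun y => α y • h₁ y) k i j x := by
          rw [← heq₂, covDeriv_congr Γ hαh]
      _ = pd α k x * h₁ x i j + α x * (h₁ x i j * Ψ₁ x k) := by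
          rw [covDeriv_smul Γ hα (hh₁ i j), heq₁]
      _ = h₁ x i j * (Ψ₁ x k * α x + pd α k x) := by ring
  have hcancel : Ψ₂ x k * α x = Ψ₁ x k * α x + pd α k x := mul_left_cancel₀ hij hmul
  field_simp
  exact hcancel

end Pointwise

/-- If the same `Γ` satisfies `∇h₁ = h₁ ⊗ Ψ₁` and `∇h₂ = h₂ ⊗ Ψ₂` with `h₂ = α·h₁` for a
smooth nowhere-vanishing `α`, then `Ψ₂ = Ψ₁ + d log|α|`. -/
theorem oneForm_rescaling {n : ℕ} (U : Set (Fin n → ℝ)) (hU : IsOpen U)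
    (Γ : (Fin n → ℝ) → Fin n → Fin n → Fin n → ℝ) (hΓ : SmoothChristoffelOn Γ U)
    (h₁ h₂ : (Fin n → ℝ) → Matrix (Fin n) (Fin n) ℝ)
    (hh₁ : SmoothMetricOn h₁ U) (hh₂ : SmoothMetricOn h₂ U)
    (Ψ₁ Ψ₂ : (Fin n → ℝ) → Fin n → ℝ)
    (hΨ₁smooth : ∀ k, ContDiffOn ℝ (⊤ : ℕ∞) (fun x => Ψ₁ x k) U)
    (hΨ₂smooth : ∀ k, ContDiffOn ℝ (⊤ : ℕ∞) (fun x => Ψ₂ x k) U)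
    (α : (Fin n → ℝ) → ℝ) (hα : ContDiffOn ℝ (⊤ : ℕ∞) α U) (hα0 : ∀ x ∈ U, α x ≠ 0)
    (hαh : ∀ x ∈ U, h₂ x = α x • h₁ x)
    (heq₁ : ∀ x ∈ U, ∀ i j k, covDeriv Γ h₁ k i j x = h₁ x i j * Ψ₁ x k)
    (heq₂ : ∀ x ∈ U, ∀ i j k, covDeriv Γ h₂ k i j x = h₂ x i j * Ψ₂ x k) :
    ∀ x ∈ U, ∀ k, Ψ₂ x k = Ψ₁ x k + pd α k x / α x := by
  intro x hx k
  have : Nonempty (Fin n) := ⟨k⟩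
  have hxU : U ∈ 𝓝 x := hU.mem_nhds hx
  exact oneForm_rescaling_general (hh₁.differentiableAt_apply hxU) (hh₁.ne_zero hx)
    ((hα.contDiffAt hxU).differentiableAt (by simp)) (hα0 x hx)
    (Filter.eventuallyEq_of_mem hxU hαh) (fun i j => heq₁ x hx i j k) fun i j => heq₂ x hx i j k
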